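/- Let X be a real vector space, Z a nonempty set, φ : Z × X → Z with φ(z,0) = z for all z, and f : Z → EReal. Suppose u : Z → EReal satisfies f ≤ u and Au ≤ u pointwise. Then for every x₀ ∈ X, z₀ ∈ Z, T ∈ ℕ and every μ ∈ M^T(x₀), one has μ[f(Z_T)] ≤ u(z₀), where Z_T is the state process along the path (x₀,…,x_T) defined by Z₀ = z₀, Z_{t+1} = φ(Z_t, x_{t+1} − x_t). -/

import Mathlib

/-- An `EReal`-valued function on a real vector space is concave
(with the convention `⊤ + ⊥ = ⊥` of `EReal`). -/
def IsEConcave {X : Type*} [AddCommGroup X] [Module ℝ X] (ψ : X → EReal) : Prop :=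
  ∀ x y : X, ∀ a b : ℝ, 0 ≤ a → 0 ≤ b → a + b = 1 →
    (a : EReal) * ψ x + (b : EReal) * ψ y ≤ ψ (a • x + b • y)

/-- The concave envelope `g^♯` of `g : X → EReal`: the pointwise infimum of all
concave functions dominating `g`. -/
noncomputable def concaveEnvelope {X : Type*} [AddCommGroup X] [Module ℝ X]
    (g : X → EReal) (x : X) : EReal :=
  ⨅ ψ : {ψ : X → EReal // IsEConcave ψ ∧ ∀ y, g y ≤ ψ y}, ψ.1 x

/-- A finitely supported probability measure on `X^{T+1}` under which the coordinate
process is a martingale in its natural filtration, starting at `x₀`; an element of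
`M^T(x₀)` (the law of a simple martingale `M₀, …, M_T` with `M₀ = x₀`).
The martingale property is expressed by testing the increment `π(t+1) - π(t)`
against all functions `h` of the path depending only on the first `t+1` coordinates. -/
structure MartLaw (X : Type*) [AddCommGroup X] [Module ℝ X] (T : ℕ) (x₀ : X) where
  supp : Finset (Fin (T + 1) → X)
  w : (Fin (T + 1) → X) → ℝ
  nonneg : ∀ π, 0 ≤ w π
  zero_off : ∀ π ∉ supp, w π = 0
  total : ∑ π ∈ supp, w π = 1
  init : ∀ π ∈ supp, w π ≠ 0 → π 0 = x₀
  mart : ∀ t : Fin T, ∀ h : (Fin (T + 1) → X) → ℝ,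
    (∀ π π' : Fin (T + 1) → X, (∀ s : Fin (T + 1), s ≤ t.castSucc → π s = π' s) → h π = h π') →
    ∑ π ∈ supp, (w π * h π) • (π t.succ - π t.castSucc) = 0

/-- The integral `μ[f]` of an `EReal`-valued function on path space under a finitely
supported martingale law, as a finite sum in `EReal`. -/
noncomputable def MartLaw.exp {X : Type*} [AddCommGroup X] [Module ℝ X] {T : ℕ} {x₀ : X}
    (μ : MartLaw X T x₀) (f : (Fin (T + 1) → X) → EReal) : EReal :=
  ∑ π ∈ μ.supp, (μ.w π : EReal) * f π

/-- The operator `A`: `Ag(z) = (g ∘ φ(z,·))^♯(0)`. -/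
noncomputable def Aop {X Z : Type*} [AddCommGroup X] [Module ℝ X]
    (φ : Z → X → Z) (g : Z → EReal) : Z → EReal :=
  fun z => concaveEnvelope (fun d => g (φ z d)) 0

/-- The state process: `Z₀ = z₀`, `Z_{t+1} = φ(Z_t, x_{t+1} - x_t)` along a path `π : ℕ → X`. -/
def stateProc {X Z : Type*} [AddCommGroup X] (φ : Z → X → Z) (z₀ : Z) (π : ℕ → X) : ℕ → Z
  | 0 => z₀
  | t + 1 => φ (stateProc φ z₀ π t) (π (t + 1) - π t)

/-- Extension of a path `x₀, …, x_T` to a path indexed by `ℕ` (constant after time `T`). -/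
def pathExt {X : Type*} {T : ℕ} (π : Fin (T + 1) → X) : ℕ → X :=
  fun s => if h : s ≤ T then π ⟨s, Nat.lt_succ_of_le h⟩ else π (Fin.last T)

/-!
For a finitely supported martingale, conditioning on the history up to time `t` amounts to summing
over the finitely many paths with a given initial segment, and the weighted increments over such a
block sum to zero. Jensen's inequality for the concave envelope, applied on each block, bounds the
conditional expectation of `u (φ Z_t (x_{t+1} - x_t))` by `Au (Z_t) ≤ u (Z_t)`. Hence
`t ↦ μ[u(Z_t)]` is nonincreasing, with initial value `u z₀`.
-/

lemma sum_coe_mul {ι : Type*} {s : Finset ι} {w : ι → ℝ} (hw : ∀ i ∈ s, 0 ≤ w i) (c : EReal) :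
    ∑ i ∈ s, (w i : EReal) * c = ((∑ i ∈ s, w i : ℝ) : EReal) * c := by
  classical
  induction s using Finset.induction_on with
  | empty => simp
  | insert i s hi ih =>
    obtain ⟨hwi, hws⟩ := Finset.forall_mem_insert _ _ _ |>.1 hw
    rw [Finset.sum_insert hi, Finset.sum_insert hi, ih hws, EReal.coe_add,
      EReal.right_distrib_of_nonneg (EReal.coe_nonneg.2 hwi)
        (EReal.coe_nonneg.2 (Finset.sum_nonneg hws))]

lemma sum_mul_le_sum_mul {ι : Type*} {s : Finset ι} {w : ι → ℝ} {f g : ι → EReal}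
    (hw : ∀ i ∈ s, 0 ≤ w i) (hfg : ∀ i ∈ s, f i ≤ g i) :
    ∑ i ∈ s, (w i : EReal) * f i ≤ ∑ i ∈ s, (w i : EReal) * g i :=
  Finset.sum_le_sum fun i hi => mul_le_mul_of_nonneg_left (hfg i hi) (EReal.coe_nonneg.2 (hw i hi))

lemma sum_smul_centerMass {𝕜 E ι : Type*} [Field 𝕜] [LinearOrder 𝕜] [IsStrictOrderedRing 𝕜]
    [AddCommGroup E] [Module 𝕜 E] {s : Finset ι} {w : ι → 𝕜} (hw : ∀ i ∈ s, 0 ≤ w i) (p : ι → E) :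
    (∑ i ∈ s, w i) • s.centerMass w p = ∑ i ∈ s, w i • p i := by
  by_cases hsum : ∑ i ∈ s, w i = 0
  · have hzero : ∀ i ∈ s, w i = 0 := (Finset.sum_eq_zero_iff_of_nonneg hw).1 hsum
    rw [hsum, zero_smul, Finset.sum_eq_zero fun i hi => by rw [hzero i hi, zero_smul]]
  · exact smul_inv_smul₀ hsum _

section Concave

variable {X : Type*} [AddCommGroup X] [Module ℝ X]

namespace IsEConcave

variable {ψ : X → EReal}

lemma mul_add_mul_le (hψ : IsEConcave ψ) {a b : ℝ} (ha : 0 ≤ a) (hb : 0 ≤ b) (x y : X) :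
    (a : EReal) * ψ x + (b : EReal) * ψ y ≤
      ((a + b : ℝ) : EReal) * ψ ((a + b)⁻¹ • (a • x + b • y)) := by
  rcases (add_nonneg ha hb).eq_or_lt with hzero | hpos
  · obtain ⟨rfl, rfl⟩ := (add_eq_zero_iff_of_nonneg ha hb).1 hzero.symm
    simp
  set c := a + b with hc
  have hinv : 0 ≤ c⁻¹ := inv_nonneg.2 hpos.le
  calc (a : EReal) * ψ x + (b : EReal) * ψ y
      = c * (((c⁻¹ * a : ℝ) : EReal) * ψ x + ((c⁻¹ * b : ℝ) : EReal) * ψ y) := by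
        rw [EReal.left_distrib_of_nonneg_of_ne_top (EReal.coe_nonneg.2 hpos.le)
          (EReal.coe_ne_top c), ← mul_assoc, ← mul_assoc, ← EReal.coe_mul, ← EReal.coe_mul,
          mul_inv_cancel_left₀ hpos.ne', mul_inv_cancel_left₀ hpos.ne']
    _ ≤ c * ψ ((c⁻¹ * a) • x + (c⁻¹ * b) • y) :=
        mul_le_mul_of_nonneg_left
          (hψ x y _ _ (mul_nonneg hinv ha) (mul_nonneg hinv hb)
            (by rw [← mul_add, ← hc, inv_mul_cancel₀ hpos.ne']))
          (EReal.coe_nonneg.2 hpos.le)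
    _ = c * ψ (c⁻¹ • (a • x + b • y)) := by rw [smul_add, smul_smul, smul_smul]

/-- If the weights sum to zero, both sides vanish, whatever the value of `ψ` at the junk point
`Finset.centerMass`. -/
lemma sum_mul_le_map_centerMass (hψ : IsEConcave ψ) {ι : Type*} {s : Finset ι} {w : ι → ℝ}
    (hw : ∀ i ∈ s, 0 ≤ w i) (p : ι → X) :
    ∑ i ∈ s, (w i : EReal) * ψ (p i) ≤
      ((∑ i ∈ s, w i : ℝ) : EReal) * ψ (s.centerMass w p) := by
  classical
  induction s using Finset.induction_on with
  | empty => simp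
  | insert i s hi ih =>
    obtain ⟨hwi, hws⟩ := Finset.forall_mem_insert _ _ _ |>.1 hw
    calc ∑ j ∈ insert i s, (w j : EReal) * ψ (p j)
        = (w i : EReal) * ψ (p i) + ∑ j ∈ s, (w j : EReal) * ψ (p j) := Finset.sum_insert hi
      _ ≤ (w i : EReal) * ψ (p i) + ((∑ j ∈ s, w j : ℝ) : EReal) * ψ (s.centerMass w p) := by
          gcongr
          exact ih hws
      _ ≤ _ := hψ.mul_add_mul_le hwi (Finset.sum_nonneg hws) _ _
      _ = ((∑ j ∈ insert i s, w j : ℝ) : EReal) * ψ ((insert i s).centerMass w p) := by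
          rw [sum_smul_centerMass hws, Finset.centerMass, Finset.sum_insert hi,
            Finset.sum_insert hi]

end IsEConcave

lemma le_concaveEnvelope (g : X → EReal) (x : X) : g x ≤ concaveEnvelope g x :=
  le_iInf fun ψ => ψ.2.2 x

lemma isEConcave_concaveEnvelope (g : X → EReal) : IsEConcave (concaveEnvelope g) := by
  intro x y a b ha hb hab
  refine le_iInf fun ψ => le_trans ?_ (ψ.2.1 x y a b ha hb hab)
  exact add_le_add
    (mul_le_mul_of_nonneg_left (iInf_le _ ψ) (EReal.coe_nonneg.2 ha))
    (mul_le_mul_of_nonneg_left (iInf_le _ ψ) (EReal.coe_nonneg.2 hb))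

lemma sum_mul_le_concaveEnvelope_centerMass (g : X → EReal) {ι : Type*} {s : Finset ι}
    {w : ι → ℝ} (hw : ∀ i ∈ s, 0 ≤ w i) (p : ι → X) :
    ∑ i ∈ s, (w i : EReal) * g (p i) ≤
      ((∑ i ∈ s, w i : ℝ) : EReal) * concaveEnvelope g (s.centerMass w p) :=
  (sum_mul_le_sum_mul hw fun i _ => le_concaveEnvelope g (p i)).trans
    ((isEConcave_concaveEnvelope g).sum_mul_le_map_centerMass hw p)

end Concave

namespace MartLaw

variable {X : Type*} [AddCommGroup X] [Module ℝ X] {T : ℕ} {x₀ : X} (μ : MartLaw X T x₀)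

lemma exp_mono {f g : (Fin (T + 1) → X) → EReal} (hfg : ∀ π, f π ≤ g π) : μ.exp f ≤ μ.exp g :=
  sum_mul_le_sum_mul (fun π _ => μ.nonneg π) fun π _ => hfg π

lemma exp_const (c : EReal) : μ.exp (fun _ => c) = c := by
  rw [exp, sum_coe_mul fun π _ => μ.nonneg π, μ.total, EReal.coe_one, one_mul]

open Classical in
lemma sum_filter_history_smul_increment_eq_zero (t : Fin T) (p : Set.Iic t.castSucc → X) :
    ∑ π ∈ μ.supp with (Set.Iic t.castSucc).domRestrict π = p,
      μ.w π • (π t.succ - π t.castSucc) = 0 := by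
  let h : (Fin (T + 1) → X) → ℝ := fun π =>
    if (Set.Iic t.castSucc).domRestrict π = p then 1 else 0
  have hh : DependsOn h (Set.Iic t.castSucc) :=
    dependsOn_iff_exists_comp.2 ⟨fun q => if q = p then 1 else 0, rfl⟩
  rw [← μ.mart t h hh, Finset.sum_filter]
  refine Finset.sum_congr rfl fun π _ => ?_
  simp only [h, mul_ite, mul_one, mul_zero, ite_smul, zero_smul]

lemma exp_increment_le_exp_concaveEnvelope (t : Fin T) {g : (Fin (T + 1) → X) → X → EReal}
    (hg : DependsOn g (Set.Iic t.castSucc)) :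
    μ.exp (fun π => g π (π t.succ - π t.castSucc)) ≤
      μ.exp fun π => concaveEnvelope (g π) 0 := by
  classical
  obtain ⟨G, rfl⟩ := dependsOn_iff_exists_comp.1 hg
  let history : (Fin (T + 1) → X) → Set.Iic t.castSucc → X := (Set.Iic t.castSucc).domRestrict
  have hmaps : ∀ π ∈ μ.supp, history π ∈ μ.supp.image history := fun π =>
    Finset.mem_image_of_mem history
  rw [exp, exp, ← Finset.sum_fiberwise_of_maps_to hmaps, ← Finset.sum_fiberwise_of_maps_to hmaps]
  refine Finset.sum_le_sum fun p _ => ?_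
  have hfiber : ∀ π ∈ μ.supp.filter (history · = p), history π = p := fun π hπ =>
    (Finset.mem_filter.1 hπ).2
  have hcenter : (μ.supp.filter (history · = p)).centerMass μ.w
      (fun π => π t.succ - π t.castSucc) = 0 := by
    rw [Finset.centerMass, μ.sum_filter_history_smul_increment_eq_zero t p, smul_zero]
  calc ∑ π ∈ μ.supp with history π = p, (μ.w π : EReal) * G (history π) (π t.succ - π t.castSucc)
      = ∑ π ∈ μ.supp with history π = p, (μ.w π : EReal) * G p (π t.succ - π t.castSucc) :=
        Finset.sum_congr rfl fun π hπ => by rw [hfiber π hπ]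
    _ ≤ ((∑ π ∈ μ.supp with history π = p, μ.w π : ℝ) : EReal) * concaveEnvelope (G p) 0 :=
        hcenter ▸ sum_mul_le_concaveEnvelope_centerMass (G p) (fun π _ => μ.nonneg π) _
    _ = ∑ π ∈ μ.supp with history π = p, (μ.w π : EReal) * concaveEnvelope (G p) 0 :=
        (sum_coe_mul (fun π _ => μ.nonneg π) _).symm
    _ = ∑ π ∈ μ.supp with history π = p, (μ.w π : EReal) * concaveEnvelope (G (history π)) 0 :=
        Finset.sum_congr rfl fun π hπ => by rw [hfiber π hπ]

end MartLaw

lemma pathExt_apply {X : Type*} {T : ℕ} (π : Fin (T + 1) → X) (s : Fin (T + 1)) :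
    pathExt π s = π s :=
  dif_pos s.is_le

section StateProcess

variable {X Z : Type*} [AddCommGroup X]

lemma dependsOn_stateProc (φ : Z → X → Z) (z₀ : Z) (t : ℕ) :
    DependsOn (fun π : ℕ → X => stateProc φ z₀ π t) (Set.Iic t) := by
  induction t with
  | zero => exact fun _ _ _ => rfl
  | succ t ih =>
    intro π π' h
    have hstate : stateProc φ z₀ π t = stateProc φ z₀ π' t :=
      ih fun s hs => h s (Set.Iic_subset_Iic.2 t.le_succ hs)
    simp only [stateProc, hstate, h (t + 1) Set.self_mem_Iic, h t t.le_succ]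

lemma dependsOn_stateProc_pathExt (φ : Z → X → Z) (z₀ : Z) {T : ℕ} (t : Fin (T + 1)) :
    DependsOn (fun π : Fin (T + 1) → X => stateProc φ z₀ (pathExt π) t) (Set.Iic t) := by
  refine fun π π' h => dependsOn_stateProc φ z₀ t fun s hs => ?_
  have hsT : s < T + 1 := lt_of_le_of_lt hs t.isLt
  calc pathExt π s = π ⟨s, hsT⟩ := pathExt_apply π ⟨s, hsT⟩
    _ = π' ⟨s, hsT⟩ := h ⟨s, hsT⟩ hs
    _ = pathExt π' s := (pathExt_apply π' ⟨s, hsT⟩).symm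

lemma stateProc_pathExt_succ (φ : Z → X → Z) (z₀ : Z) {T : ℕ} (π : Fin (T + 1) → X) (t : Fin T) :
    stateProc φ z₀ (pathExt π) t.succ =
      φ (stateProc φ z₀ (pathExt π) t.castSucc) (π t.succ - π t.castSucc) := by
  rw [← pathExt_apply π t.succ, ← pathExt_apply π t.castSucc]
  rfl

variable [Module ℝ X]

lemma MartLaw.exp_stateProc_succ_le {T : ℕ} {x₀ : X} (μ : MartLaw X T x₀) (φ : Z → X → Z)
    (u : Z → EReal) (z₀ : Z) (t : Fin T) :
    (μ.exp fun π => u (stateProc φ z₀ (pathExt π) t.succ)) ≤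
      μ.exp fun π => Aop φ u (stateProc φ z₀ (pathExt π) t.castSucc) := by
  simp only [stateProc_pathExt_succ]
  refine μ.exp_increment_le_exp_concaveEnvelope t
    (g := fun π d => u (φ (stateProc φ z₀ (pathExt π) t.castSucc) d)) fun π π' h => ?_
  simp only [dependsOn_stateProc_pathExt φ z₀ t.castSucc h]

theorem exp_state_le_of_superFixed_general (φ : Z → X → Z) {f u : Z → EReal}
    (hfu : ∀ z, f z ≤ u z) (hAu : ∀ z, Aop φ u z ≤ u z) {x₀ : X} (z₀ : Z) {T : ℕ}
    (μ : MartLaw X T x₀) (t : Fin (T + 1)) :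
    (μ.exp fun π => f (stateProc φ z₀ (pathExt π) t)) ≤ u z₀ := by
  have hu : (μ.exp fun π => u (stateProc φ z₀ (pathExt π) t)) ≤ u z₀ := by
    induction t using Fin.induction with
    | zero => exact (μ.exp_const (u z₀)).le
    | succ t ih =>
      calc (μ.exp fun π => u (stateProc φ z₀ (pathExt π) t.succ))
          ≤ μ.exp fun π => Aop φ u (stateProc φ z₀ (pathExt π) t.castSucc) :=
            μ.exp_stateProc_succ_le φ u z₀ t
        _ ≤ μ.exp fun π => u (stateProc φ z₀ (pathExt π) t.castSucc) := μ.exp_mono fun _ => hAu _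
        _ ≤ u z₀ := ih
  exact (μ.exp_mono fun _ => hfu _).trans hu

end StateProcess

/-- If `u` satisfies `f ≤ u` and `Au ≤ u` pointwise, then for every
martingale law `μ ∈ M^T(x₀)` one has `μ[f(Z_T)] ≤ u(z₀)`. -/
theorem exp_state_le_of_superFixed {X Z : Type*} [AddCommGroup X] [Module ℝ X] [Nonempty Z]
    (φ : Z → X → Z) (hφ : ∀ z, φ z 0 = z) (f u : Z → EReal)
    (hfu : ∀ z, f z ≤ u z) (hAu : ∀ z, Aop φ u z ≤ u z)
    (x₀ : X) (z₀ : Z) (T : ℕ) (μ : MartLaw X T x₀) :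
    (μ.exp fun π => f (stateProc φ z₀ (pathExt π) T)) ≤ u z₀ :=
  exp_state_le_of_superFixed_general φ hfu hAu z₀ μ (Fin.last T)
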